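/- Given positive integers s < m and a field K, there exist an integer n and a squarefree monomial ideal I ⊆ S = K[x_1,…,x_n] such that ν(I) = m, g_I(k) = 1 for k = 1,…,s, and g_I(k) = 0 for k = s+1,…,m. -/

import Mathlib

open MvPolynomial

/-- The squarefree monomial `∏ i ∈ F, xᵢ`. -/
noncomputable def sqMon (K : Type) [Field K] {σ : Type} (F : Finset σ) :
    MvPolynomial σ K := ∏ i ∈ F, X i

/-- `I` is a squarefree monomial ideal if it is generated by squarefree monomials. -/
def IsSqfreeMonomialIdeal (K : Type) [Field K] {σ : Type}
    (I : Ideal (MvPolynomial σ K)) : Prop :=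
  ∃ 𝒢 : Set (Finset σ), I = Ideal.span ((sqMon K) '' 𝒢)

/-- The `k`-th squarefree power `I^[k]`: the ideal generated by all squarefree
monomials belonging to `I^k`. -/
noncomputable def sqfreePower (K : Type) [Field K] {σ : Type}
    (I : Ideal (MvPolynomial σ K)) (k : ℕ) : Ideal (MvPolynomial σ K) :=
  Ideal.span {m | ∃ F : Finset σ, m = sqMon K F ∧ m ∈ I ^ k}

/-- The monomial grade `ν(I)`: the largest `k` with `I^[k] ≠ (0)`. -/
noncomputable def monGrade (K : Type) [Field K] {σ : Type}
    (I : Ideal (MvPolynomial σ K)) : ℕ :=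
  sSup {k | sqfreePower K I k ≠ ⊥}

/-- The initial degree of a squarefree monomial ideal: the least degree of a
(squarefree) monomial belonging to it. -/
noncomputable def indeg (K : Type) [Field K] {σ : Type}
    (I : Ideal (MvPolynomial σ K)) : ℕ :=
  sInf {d | ∃ F : Finset σ, F.card = d ∧ sqMon K F ∈ I}

/-- The depth of `S/I` over the polynomial ring `S`: the longest length of a
regular sequence on `S/I` consisting of elements of the irrelevant maximal ideal. -/
noncomputable def polyDepth (K : Type) [Field K] {σ : Type}
    (I : Ideal (MvPolynomial σ K)) : ℕ :=
  sSup {k | ∃ rs : List (MvPolynomial σ K), rs.length = k ∧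
    (∀ r ∈ rs, r ∈ Ideal.span (Set.range (X : σ → MvPolynomial σ K))) ∧
    RingTheory.Sequence.IsRegular (MvPolynomial σ K ⧸ I) rs}

/-- The normalized depth function `g_I(k) = depth(S/I^[k]) - (indeg(I^[k]) - 1)`. -/
noncomputable def nDepth (K : Type) [Field K] {σ : Type}
    (I : Ideal (MvPolynomial σ K)) (k : ℕ) : ℤ :=
  (polyDepth K (sqfreePower K I k) : ℤ) - ((indeg K (sqfreePower K I k) : ℤ) - 1)

section HomologicalAlgebra

open CategoryTheory Abelian

/-- All groups `Ext^i(N, M)` with `i < r` vanish. -/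
def ExtVanishesBelow {R : Type} [CommRing R] (N M : ModuleCat.{0} R) (r : ℕ) : Prop :=
  ∀ i < r, Subsingleton (Ext N M i)

/-- The least degree of a nonzero `Ext^i(N, M)` is `r`. -/
def ExtStartsAt {R : Type} [CommRing R] (N M : ModuleCat.{0} R) (r : ℕ) : Prop :=
  ExtVanishesBelow N M r ∧ Nontrivial (Ext N M r)

section Sequence

variable {R : Type} [CommRing R] {N : ModuleCat.{0} R} {S : ShortComplex (ModuleCat.{0} R)}

lemma ExtVanishesBelow.mono {M : ModuleCat.{0} R} {r t : ℕ} (h : ExtVanishesBelow N M r)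
    (htr : t ≤ r) : ExtVanishesBelow N M t :=
  fun i hi ↦ h i (hi.trans_le htr)

lemma ExtStartsAt.of_shortExact (hS : S.ShortExact) {r : ℕ} (h₁ : ExtStartsAt N S.X₁ r)
    (h₃ : ExtVanishesBelow N S.X₃ r) : ExtStartsAt N S.X₂ r := by
  refine ⟨fun i hi ↦ ?_, ?_⟩
  · have := h₁.1 i hi
    have := h₃ i hi
    refine subsingleton_of_forall_eq 0 fun x ↦ ?_
    obtain ⟨y, rfl⟩ := Ext.covariant_sequence_exact₂ N hS x (Subsingleton.elim _ _)
    rw [Subsingleton.elim y 0, Ext.zero_comp]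
  · obtain ⟨x, hx⟩ := (nontrivial_iff_exists_ne (0 : Ext N S.X₁ r)).1 h₁.2
    refine ⟨⟨x.comp (Ext.mk₀ S.f) (add_zero r), 0, fun h0 ↦ hx ?_⟩⟩
    cases r with
    | zero =>
      have := hS.mono_f
      exact (injective_iff_map_eq_zero _).1 (Ext.postcomp_mk₀_injective_of_mono N S.f) x h0
    | succ r =>
      have := h₃ r (Nat.lt_succ_self r)
      obtain ⟨y, rfl⟩ := Ext.covariant_sequence_exact₁ N hS x h0 rfl
      rw [Subsingleton.elim y 0, Ext.zero_comp]

lemma ExtStartsAt.of_shortExact_of_comp_eq_zero (hS : S.ShortExact) {r : ℕ}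
    (h0 : ∀ (i : ℕ) (x : Ext N S.X₁ i), x.comp (Ext.mk₀ S.f) (add_zero i) = 0)
    (h₁₂ : ∀ i, Subsingleton (Ext N S.X₁ i) → Subsingleton (Ext N S.X₂ i))
    (h₃ : ExtStartsAt N S.X₃ r) : ExtStartsAt N S.X₁ (r + 1) := by
  have hv : ExtVanishesBelow N S.X₁ (r + 1) := by
    intro i hi
    refine subsingleton_of_forall_eq 0 fun x ↦ ?_
    cases i with
    | zero =>
      have := hS.mono_f
      exact (injective_iff_map_eq_zero _).1 (Ext.postcomp_mk₀_injective_of_mono N S.f) x (h0 0 x)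
    | succ i =>
      have := h₃.1 i (by omega)
      obtain ⟨y, rfl⟩ := Ext.covariant_sequence_exact₁ N hS x (h0 _ x) rfl
      rw [Subsingleton.elim y 0, Ext.zero_comp]
  refine ⟨hv, ?_⟩
  obtain ⟨x, hx⟩ := (nontrivial_iff_exists_ne (0 : Ext N S.X₃ r)).1 h₃.2
  refine ⟨⟨x.comp hS.extClass rfl, 0, fun h0 ↦ hx ?_⟩⟩
  have := h₁₂ r (hv r (Nat.lt_succ_self r))
  obtain ⟨y, rfl⟩ := Ext.covariant_sequence_exact₃ N hS x rfl h0
  rw [Subsingleton.elim y 0, Ext.zero_comp]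

end Sequence

section Linear

variable {R : Type} [CommRing R] {N : ModuleCat.{0} R}

variable {A B C : Type} [AddCommGroup A] [Module R A] [AddCommGroup B] [Module R B]
  [AddCommGroup C] [Module R C]

lemma shortExact_of_exact (f : A →ₗ[R] B) (g : B →ₗ[R] C) (hf : Function.Injective f)
    (hfg : Function.Exact f g) (hg : Function.Surjective g) :
    (ShortComplex.moduleCatMk f g hfg.linearMap_comp_eq_zero).ShortExact where
  exact := (ShortComplex.ShortExact.moduleCat_exact_iff_function_exact _).2 hfg
  mono_f := (ModuleCat.mono_iff_injective _).2 hf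
  epi_g := (ModuleCat.epi_iff_surjective _).2 hg

lemma ExtStartsAt.of_exact (f : A →ₗ[R] B) (g : B →ₗ[R] C) (hf : Function.Injective f)
    (hfg : Function.Exact f g) (hg : Function.Surjective g) {r : ℕ}
    (hA : ExtStartsAt N (ModuleCat.of R A) r) (hC : ExtVanishesBelow N (ModuleCat.of R C) r) :
    ExtStartsAt N (ModuleCat.of R B) r :=
  ExtStartsAt.of_shortExact (shortExact_of_exact f g hf hfg hg) hA hC

lemma ExtStartsAt.succ_of_exact {a : R} (ha : a ∈ Module.annihilator R N) (g : B →ₗ[R] C)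
    (hf : Function.Injective (LinearMap.lsmul R B a))
    (hfg : Function.Exact (LinearMap.lsmul R B a) g)
    (hg : Function.Surjective g) {r : ℕ} (hC : ExtStartsAt N (ModuleCat.of R C) r) :
    ExtStartsAt N (ModuleCat.of R B) (r + 1) :=
  ExtStartsAt.of_shortExact_of_comp_eq_zero (shortExact_of_exact _ g hf hfg hg)
    (fun i x ↦ congr($(Ext.postcomp_smul_id_eq_zero_of_mem_annihilator
      (M := ModuleCat.of R B) ha i).hom x))
    (fun _ h ↦ h) hC

lemma extStartsAt_zero_self [Nontrivial N] : ExtStartsAt N N 0 := by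
  refine ⟨fun i hi ↦ absurd hi (Nat.not_lt_zero i), ?_⟩
  have : Nontrivial (N ⟶ N) := by
    refine ⟨𝟙 N, 0, fun h ↦ ?_⟩
    obtain ⟨x, hx⟩ := exists_ne (0 : N)
    exact hx congr($(h).hom x)
  exact Ext.homEquiv₀.symm.injective.nontrivial

end Linear

end HomologicalAlgebra

section Quotient

variable {R : Type} [CommRing R] {N : ModuleCat.{0} R} {I I' I'' : Ideal R} {x : R}

lemma quotient_colon_exact (hx : x ∈ I'') (hI : I ≤ I'') (hI' : ∀ p, p ∈ I' ↔ x * p ∈ I)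
    (hdiv : ∀ p ∈ I'', ∃ q, p - x * q ∈ I) :
    Function.Injective (Submodule.mapQ I' I (LinearMap.lsmul R R x) fun p hp ↦ (hI' p).1 hp) ∧
    Function.Exact (Submodule.mapQ I' I (LinearMap.lsmul R R x) fun p hp ↦ (hI' p).1 hp)
      (Submodule.factor hI) ∧ Function.Surjective (Submodule.factor hI) := by
  refine ⟨?_, ?_, Submodule.factor_surjective hI⟩
  · rw [injective_iff_map_eq_zero]
    intro a ha
    obtain ⟨p, rfl⟩ := Submodule.Quotient.mk_surjective _ a
    exact (Submodule.Quotient.mk_eq_zero _).2 ((hI' p).2 ((Submodule.Quotient.mk_eq_zero _).1 ha))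
  · intro b
    obtain ⟨p, rfl⟩ := Submodule.Quotient.mk_surjective _ b
    constructor
    · intro h
      obtain ⟨q, hq⟩ := hdiv p ((Submodule.Quotient.mk_eq_zero _).1 h)
      exact ⟨Submodule.Quotient.mk q, ((Submodule.Quotient.eq _).2 hq).symm⟩
    · rintro ⟨a, ha⟩
      obtain ⟨q, rfl⟩ := Submodule.Quotient.mk_surjective _ a
      rw [← ha]
      exact (Submodule.Quotient.mk_eq_zero _).2 (I''.mul_mem_right q hx)

lemma ExtStartsAt.quotient_of_colon (hx : x ∈ I'') (hI : I ≤ I'')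
    (hI' : ∀ p, p ∈ I' ↔ x * p ∈ I) (hdiv : ∀ p ∈ I'', ∃ q, p - x * q ∈ I) {r : ℕ}
    (h' : ExtStartsAt N (ModuleCat.of R (R ⧸ I')) r)
    (h'' : ExtVanishesBelow N (ModuleCat.of R (R ⧸ I'')) r) :
    ExtStartsAt N (ModuleCat.of R (R ⧸ I)) r := by
  obtain ⟨h₁, h₂, h₃⟩ := quotient_colon_exact hx hI hI' hdiv
  exact ExtStartsAt.of_exact _ _ h₁ h₂ h₃ h' h''

lemma ExtStartsAt.quotient_succ_of_colon_self (ha : x ∈ Module.annihilator R N) (hx : x ∈ I'')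
    (hI : I ≤ I'') (hI' : ∀ p, p ∈ I ↔ x * p ∈ I) (hdiv : ∀ p ∈ I'', ∃ q, p - x * q ∈ I) {r : ℕ}
    (h : ExtStartsAt N (ModuleCat.of R (R ⧸ I'')) r) :
    ExtStartsAt N (ModuleCat.of R (R ⧸ I)) (r + 1) := by
  obtain ⟨h₁, h₂, h₃⟩ := quotient_colon_exact hx hI hI' hdiv
  have heq : Submodule.mapQ I I (LinearMap.lsmul R R x) (fun p hp ↦ (hI' p).1 hp) =
      LinearMap.lsmul R (R ⧸ I) x := by
    ext
    rfl
  rw [heq] at h₁ h₂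
  exact ExtStartsAt.succ_of_exact ha _ h₁ h₂ h₃ h

end Quotient

section Depth

variable (K : Type) [Field K] {σ : Type}

/-- The residue field at the origin, as a module. -/
noncomputable abbrev originModule (σ : Type) : ModuleCat.{0} (MvPolynomial σ K) :=
  ModuleCat.of _ (MvPolynomial σ K ⧸ Ideal.span (Set.range (X : σ → MvPolynomial σ K)))

lemma span_range_X_ne_top : Ideal.span (Set.range (X : σ → MvPolynomial σ K)) ≠ ⊤ := by
  intro h
  have hle : Ideal.span (Set.range (X : σ → MvPolynomial σ K)) ≤
      RingHom.ker (constantCoeff : MvPolynomial σ K →+* K) := by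
    rw [Ideal.span_le]
    rintro _ ⟨i, rfl⟩
    simp
  exact RingHom.ker_ne_top _ (top_le_iff.1 (h ▸ hle))

variable {K}

lemma polyDepth_eq_of_extStartsAt [Finite σ] {J : Ideal (MvPolynomial σ K)}
    (hJ : J ≤ Ideal.span (Set.range X)) {r : ℕ}
    (h : ExtStartsAt (originModule K σ) (ModuleCat.of _ (MvPolynomial σ K ⧸ J)) r) :
    polyDepth K J = r := by
  have hsupp : Module.support (MvPolynomial σ K) (originModule K σ) =
      PrimeSpectrum.zeroLocus (Ideal.span (Set.range (X : σ → MvPolynomial σ K)) : Set _) := by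
    rw [Module.support_eq_zeroLocus, Ideal.annihilator_quotient]
  have hlt : Ideal.span (Set.range (X : σ → MvPolynomial σ K)) •
      (⊤ : Submodule (MvPolynomial σ K) (MvPolynomial σ K ⧸ J)) < ⊤ := by
    rw [lt_top_iff_ne_top]
    intro htop
    have hle : Ideal.span (Set.range (X : σ → MvPolynomial σ K)) •
        (⊤ : Submodule (MvPolynomial σ K) (MvPolynomial σ K ⧸ J)) ≤
        Submodule.map J.mkQ (Ideal.span (Set.range X)) := by
      rw [Submodule.smul_le]
      rintro a ha b -
      obtain ⟨q, rfl⟩ := Submodule.Quotient.mk_surjective _ b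
      exact ⟨a * q, Ideal.mul_mem_right _ _ ha, rfl⟩
    obtain ⟨p, hp, hp1⟩ := hle (htop.ge (Submodule.mem_top (x := J.mkQ 1)))
    have h1 := hJ ((Submodule.Quotient.eq _).1 hp1)
    exact span_range_X_ne_top K ((Ideal.eq_top_iff_one _).2 (by simpa using Ideal.sub_mem _ hp h1))
  refine IsGreatest.csSup_eq ⟨?_, ?_⟩
  · exact ModuleCat.exists_isRegular_of_exists_subsingleton_ext _ r
      (ModuleCat.of _ (MvPolynomial σ K ⧸ J)) hlt (originModule K σ) hsupp h.1
  · rintro _ ⟨rs, rfl, hmem, hreg⟩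
    by_contra! hr
    exact not_subsingleton_iff_nontrivial.2 h.2
      (ModuleCat.subsingleton_ext_of_exists_isRegular _ (originModule K σ) hsupp.subset
        (ModuleCat.of _ (MvPolynomial σ K ⧸ J)) hlt rs hmem hreg r hr)

end Depth

section SupportIdeal

variable (K : Type) [Field K] {σ : Type}

/-- The ideal of polynomials all of whose monomials have support in the upper set `U`. -/
noncomputable def supportIdeal (U : UpperSet (Finset σ)) : Ideal (MvPolynomial σ K) where
  carrier := {p | ∀ m ∈ p.support, m.support ∈ U}
  zero_mem' := by simp
  add_mem' {p q} hp hq m hm := by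
    classical
    exact (Finset.mem_union.1 (support_add hm)).elim (hp m) (hq m)
  smul_mem' q p hp m hm := by
    classical
    obtain ⟨a, -, b, hb, rfl⟩ := Finset.mem_add.1 (support_mul q p hm)
    refine U.upper ?_ (hp b hb)
    intro i hi
    simp only [Finsupp.mem_support_iff, Finsupp.add_apply] at hi ⊢
    omega

variable {K}

lemma mem_supportIdeal {U : UpperSet (Finset σ)} {p : MvPolynomial σ K} :
    p ∈ supportIdeal K U ↔ ∀ m ∈ p.support, m.support ∈ U := Iff.rfl

lemma supportIdeal_le_span_range_X {U : UpperSet (Finset σ)} (hU : ∅ ∉ U) :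
    supportIdeal K U ≤ Ideal.span (Set.range X) := by
  intro p hp
  rw [← Set.image_univ, mem_ideal_span_X_image]
  intro m hm
  have hne : m.support ≠ ∅ := fun h ↦ hU (h ▸ hp m hm)
  obtain ⟨i, hi⟩ := Finset.nonempty_iff_ne_empty.2 hne
  exact ⟨i, Set.mem_univ i, Finsupp.mem_support_iff.1 hi⟩

lemma supportIdeal_eq_span_range_X {U : UpperSet (Finset σ)} (hU : ∀ F, F ∈ U ↔ F ≠ ∅) :
    supportIdeal K U = Ideal.span (Set.range X) := by
  refine le_antisymm (supportIdeal_le_span_range_X (by simp [hU])) ?_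
  rw [Ideal.span_le]
  rintro _ ⟨i, rfl⟩ m hm
  rw [support_X, Finset.mem_singleton] at hm
  subst hm
  rw [hU, Finsupp.support_single i one_ne_zero]
  exact Finset.singleton_ne_empty i

lemma X_mul_mem_supportIdeal_iff [DecidableEq σ] {U U' : UpperSet (Finset σ)} {v : σ}
    (hU' : ∀ F, F ∈ U' ↔ insert v F ∈ U) (p : MvPolynomial σ K) :
    p ∈ supportIdeal K U' ↔ X v * p ∈ supportIdeal K U := by
  have hsupp (m : σ →₀ ℕ) : (Finsupp.single v 1 + m).support = insert v m.support := by
    ext i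
    by_cases h : i = v
    · subst h
      simp
    · simp [h]
  simp [mem_supportIdeal, hU', support_X_mul, hsupp, -mem_support_iff]

lemma exists_sub_X_mul_mem_supportIdeal {U U' : UpperSet (Finset σ)} {v : σ}
    (hU' : ∀ F, F ∈ U' ↔ F ∈ U ∨ v ∈ F) (p : MvPolynomial σ K) (hp : p ∈ supportIdeal K U') :
    ∃ q, p - X v * q ∈ supportIdeal K U := by
  refine ⟨p.divMonomial (Finsupp.single v 1), ?_⟩
  have hmod : p - X v * p.divMonomial (Finsupp.single v 1) =
      p.modMonomial (Finsupp.single v 1) := by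
    rw [sub_eq_iff_eq_add', divMonomial_add_modMonomial_single]
  rw [hmod]
  intro m hm
  rw [mem_support_iff] at hm
  by_cases hle : Finsupp.single v 1 ≤ m
  · exact absurd (coeff_modMonomial_of_le p hle) hm
  · rw [coeff_modMonomial_of_not_le p hle] at hm
    refine ((hU' _).1 (hp m (mem_support_iff.2 hm))).resolve_right fun hv ↦ hle ?_
    rw [Finsupp.single_le_iff]
    exact Nat.one_le_iff_ne_zero.2 (Finsupp.mem_support_iff.1 hv)

lemma supportIdeal_mono {U U' : UpperSet (Finset σ)} (h : ∀ F ∈ U, F ∈ U') :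
    supportIdeal K U ≤ supportIdeal K U' :=
  fun _ hp m hm ↦ h _ (hp m hm)

lemma X_mem_supportIdeal {U : UpperSet (Finset σ)} {v : σ} (hv : {v} ∈ U) :
    X v ∈ supportIdeal K U := by
  intro m hm
  rw [support_X, Finset.mem_singleton] at hm
  rwa [hm, Finsupp.support_single v one_ne_zero]

variable (K) in
/-- The depth of the quotient by `supportIdeal K U`, in terms of `Ext`. -/
def HasDepth (U : UpperSet (Finset σ)) (r : ℕ) : Prop :=
  ExtStartsAt (originModule K σ) (ModuleCat.of _ (MvPolynomial σ K ⧸ supportIdeal K U)) r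

lemma HasDepth.of_link_of_deletion [DecidableEq σ] {U L D : UpperSet (Finset σ)} {v : σ}
    (hL : ∀ F, F ∈ L ↔ insert v F ∈ U) (hD : ∀ F, F ∈ D ↔ F ∈ U ∨ v ∈ F) {r t : ℕ}
    (h : HasDepth K L r) (h' : HasDepth K D t) (hrt : r ≤ t) : HasDepth K U r :=
  ExtStartsAt.quotient_of_colon (X_mem_supportIdeal ((hD _).2 (by simp)))
    (supportIdeal_mono fun F hF ↦ (hD F).2 (Or.inl hF)) (X_mul_mem_supportIdeal_iff hL)
    (exists_sub_X_mul_mem_supportIdeal hD) h (h'.1.mono hrt)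

lemma HasDepth.of_cone [DecidableEq σ] {U D : UpperSet (Finset σ)} {v : σ}
    (hU : ∀ F, F ∈ U ↔ insert v F ∈ U) (hD : ∀ F, F ∈ D ↔ F ∈ U ∨ v ∈ F) {r : ℕ}
    (h : HasDepth K D r) : HasDepth K U (r + 1) :=
  ExtStartsAt.quotient_succ_of_colon_self
    (by
      rw [Ideal.annihilator_quotient]
      exact Ideal.subset_span (Set.mem_range_self v))
    (X_mem_supportIdeal ((hD _).2 (by simp)))
    (supportIdeal_mono fun F hF ↦ (hD F).2 (Or.inl hF)) (X_mul_mem_supportIdeal_iff hU)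
    (exists_sub_X_mul_mem_supportIdeal hD) h

lemma hasDepth_zero {U : UpperSet (Finset σ)} (hU : ∀ F, F ∈ U ↔ F ≠ ∅) : HasDepth K U 0 := by
  unfold HasDepth
  rw [supportIdeal_eq_span_range_X hU]
  have : Nontrivial (originModule K σ) := Ideal.Quotient.nontrivial_iff.2 (span_range_X_ne_top K)
  exact extStartsAt_zero_self

lemma HasDepth.polyDepth_eq [Finite σ] {U : UpperSet (Finset σ)} {r : ℕ} (h : HasDepth K U r)
    (hU : ∅ ∉ U) : polyDepth K (supportIdeal K U) = r :=
  polyDepth_eq_of_extStartsAt (supportIdeal_le_span_range_X hU) h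

end SupportIdeal

section Threshold

variable {σ : Type} {V : Finset σ} {w : σ → ℕ} {c : ℕ} {v : σ}

/-- The nonfaces of the simplicial complex of all subsets of `V` of weight at most `c`. -/
def threshold (V : Finset σ) (w : σ → ℕ) (c : ℕ) : UpperSet (Finset σ) where
  carrier := {F | F ⊆ V → c < ∑ i ∈ F, w i}
  upper' _ _ h hF hG := (hF (h.trans hG)).trans_le (Finset.sum_le_sum_of_subset h)

lemma mem_threshold {F : Finset σ} : F ∈ threshold V w c ↔ (F ⊆ V → c < ∑ i ∈ F, w i) := Iff.rfl

lemma sum_eq_two_mul_add (hw : ∀ i ∈ V, w i ≤ 2) :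
    ∑ i ∈ V, w i = 2 * (V.filter (w · = 2)).card + (V.filter (w · = 1)).card := by
  simp only [Finset.card_filter, Finset.mul_sum, ← Finset.sum_add_distrib]
  refine Finset.sum_congr rfl fun i hi ↦ ?_
  have := hw i hi
  interval_cases w i <;> rfl

lemma card_eq_add_add (hw : ∀ i ∈ V, w i ≤ 2) :
    V.card = (V.filter (w · = 0)).card + (V.filter (w · = 1)).card +
      (V.filter (w · = 2)).card := by
  rw [Finset.card_eq_sum_ones V]
  simp only [Finset.card_filter, ← Finset.sum_add_distrib]
  refine Finset.sum_congr rfl fun i hi ↦ ?_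
  have := hw i hi
  interval_cases w i <;> rfl

variable [DecidableEq σ]

lemma mem_threshold_link (hv : v ∈ V) (hc : w v ≤ c) (F : Finset σ) :
    F ∈ threshold V (Function.update w v 0) (c - w v) ↔ insert v F ∈ threshold V w c := by
  have h₁ : ∑ i ∈ F, Function.update w v 0 i = ∑ i ∈ F.erase v, w i := by
    rw [← Finset.sum_erase F (Function.update_self v 0 w)]
    exact Finset.sum_congr rfl fun i hi ↦ Function.update_of_ne (Finset.ne_of_mem_erase hi) 0 w
  have h₂ : ∑ i ∈ insert v F, w i = w v + ∑ i ∈ F.erase v, w i := by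
    rw [← Finset.insert_erase (Finset.mem_insert_self v F), Finset.erase_insert_eq_erase,
      Finset.sum_insert (Finset.notMem_erase v F)]
  rw [mem_threshold, mem_threshold, h₁, h₂, Finset.insert_subset_iff]
  simp only [hv, true_and]
  refine imp_congr_right fun _ ↦ ?_
  omega

lemma mem_threshold_erase (F : Finset σ) :
    F ∈ threshold (V.erase v) w c ↔ F ∈ threshold V w c ∨ v ∈ F := by
  simp only [mem_threshold, Finset.subset_erase]
  tauto

lemma threshold_erase_of_lt (hc : c < w v) : threshold (V.erase v) w c = threshold V w c := by
  ext F
  simp only [SetLike.mem_coe, mem_threshold, Finset.subset_erase]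
  refine ⟨fun h hF ↦ ?_, fun h hF ↦ h hF.1⟩
  by_cases hvF : v ∈ F
  · exact hc.trans_le (Finset.single_le_sum (fun _ _ ↦ Nat.zero_le _) hvF)
  · exact h ⟨hF, hvF⟩

lemma card_filter_erase (hv : v ∈ V) (j : ℕ) :
    ((V.erase v).filter (w · = j)).card + (if w v = j then 1 else 0) =
      (V.filter (w · = j)).card := by
  conv_rhs => rw [← Finset.insert_erase hv, Finset.filter_insert]
  split_ifs
  · rw [Finset.card_insert_of_notMem (by simp)]
  · rfl

lemma card_filter_update (hv : v ∈ V) (j : ℕ) :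
    (V.filter (Function.update w v 0 · = j)).card + (if w v = j then 1 else 0) =
      (V.filter (w · = j)).card + (if 0 = j then 1 else 0) := by
  rw [← card_filter_erase hv, ← card_filter_erase hv, Function.update_self]
  have : (V.erase v).filter (Function.update w v 0 · = j) = (V.erase v).filter (w · = j) :=
    Finset.filter_congr fun i hi ↦ by rw [Function.update_of_ne (Finset.ne_of_mem_erase hi)]
  rw [this]
  omega

variable (K : Type) [Field K]

lemma hasDepth_threshold_of_sum_le (hc : ∑ i ∈ V, w i ≤ c) :
    HasDepth K (threshold V w c) V.card := by
  induction V using Finset.induction_on with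
  | empty =>
    refine hasDepth_zero fun F ↦ ?_
    rw [mem_threshold, Finset.subset_empty]
    refine ⟨?_, fun h h' ↦ absurd h' h⟩
    rintro h rfl
    simpa using h rfl
  | insert v V hv ih =>
    rw [Finset.sum_insert hv] at hc
    rw [Finset.card_insert_of_notMem hv]
    refine HasDepth.of_cone (v := v) (fun F ↦ ?_) (fun F ↦ ?_) (ih (by omega))
    · have key {G : Finset σ} : G ∈ threshold (insert v V) w c ↔ ¬ G ⊆ insert v V := by
        refine ⟨fun h hG ↦ ?_, fun h hG ↦ absurd hG h⟩
        have h₁ := h hG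
        have h₂ := Finset.sum_le_sum_of_subset (f := w) hG
        rw [Finset.sum_insert hv] at h₂
        omega
      rw [key, key, Finset.insert_subset_iff]
      simp
    · rw [← mem_threshold_erase, Finset.erase_insert hv]

/-- The depth of the complex of sets of weight at most `c`, for `p` elements of weight two and
`q` elements of weight one. -/
def thresholdDepth (p q c : ℕ) : ℕ :=
  if 2 * p + q ≤ c then p + q else if 2 * p ≤ c then c - p else (c + 1) / 2

lemma hasDepth_threshold {p q z : ℕ} (hw : ∀ i ∈ V, w i ≤ 2) (hp : (V.filter (w · = 2)).card = p)
    (hq : (V.filter (w · = 1)).card = q) (hz : (V.filter (w · = 0)).card = z)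
    (hpq : 1 ≤ q ∨ 2 * p ≤ c) : HasDepth K (threshold V w c) (z + thresholdDepth p q c) := by
  obtain ⟨n, hn⟩ : ∃ n, n = p + q := ⟨_, rfl⟩
  induction n generalizing V w c p q z with
  | zero =>
    have hd := hasDepth_threshold_of_sum_le K (V := V) (w := w) (c := c)
      (by rw [sum_eq_two_mul_add hw]; omega)
    rw [card_eq_add_add hw, hp, hq, hz] at hd
    convert hd using 1
    unfold thresholdDepth
    split_ifs <;> omega
  | succ n ih =>
    by_cases hle : 2 * p + q ≤ c
    · have hd := hasDepth_threshold_of_sum_le K (V := V) (w := w) (c := c)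
        (by rw [sum_eq_two_mul_add hw]; omega)
      rw [card_eq_add_add hw, hp, hq, hz] at hd
      convert hd using 1
      unfold thresholdDepth
      split_ifs
      omega
    obtain ⟨v, hv, hwv⟩ : ∃ v ∈ V, (w v = 2 ∧ 1 ≤ p) ∨ (w v = 1 ∧ p = 0 ∧ 1 ≤ q) := by
      rcases Nat.eq_zero_or_pos p with hp0 | hp0
      · obtain ⟨v, hv⟩ := Finset.card_pos.1 (show 0 < (V.filter (w · = 1)).card by omega)
        rw [Finset.mem_filter] at hv
        exact ⟨v, hv.1, Or.inr ⟨hv.2, hp0, by omega⟩⟩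
      · obtain ⟨v, hv⟩ := Finset.card_pos.1 (show 0 < (V.filter (w · = 2)).card by omega)
        rw [Finset.mem_filter] at hv
        exact ⟨v, hv.1, Or.inl ⟨hv.2, hp0⟩⟩
    have hE (j : ℕ) := card_filter_erase (w := w) hv j
    have hU (j : ℕ) := card_filter_update (w := w) hv j
    have hE0 := hE 0
    have hE1 := hE 1
    have hE2 := hE 2
    have hU0 := hU 0
    have hU1 := hU 1
    have hU2 := hU 2
    have hwE : ∀ i ∈ V.erase v, w i ≤ 2 := fun i hi ↦ hw i (Finset.mem_of_mem_erase hi)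
    have hwU : ∀ i ∈ V, Function.update w v 0 i ≤ 2 := by
      intro i hi
      rw [Function.update_apply]
      split_ifs
      · exact Nat.zero_le 2
      · exact hw i hi
    rcases hwv with ⟨hwv, hp1⟩ | ⟨hwv, hp0, hq1⟩
    · simp only [hwv, OfNat.ofNat_ne_zero, OfNat.ofNat_ne_one, OfNat.zero_ne_ofNat, zero_ne_one,
        if_true, if_false] at hE0 hE1 hE2 hU0 hU1 hU2
      have hD := ih (c := c) hwE (p := p - 1) (by omega) (hE1.trans hq) (hE0.trans hz) (by omega)
        (by omega)
      by_cases hc : w v ≤ c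
      · have hL := ih (c := c - w v) hwU (p := p - 1) (q := q) (z := z + 1) (by omega) (by omega)
          (by omega) (by omega) (by omega)
        have heq : z + 1 + thresholdDepth (p - 1) q (c - w v) = z + thresholdDepth p q c := by
          unfold thresholdDepth
          split_ifs <;> omega
        refine HasDepth.of_link_of_deletion (mem_threshold_link hv hc)
          (mem_threshold_erase) (heq ▸ hL) hD ?_
        unfold thresholdDepth
        split_ifs <;> omega
      · rw [← threshold_erase_of_lt (not_le.1 hc)]
        convert hD using 1
        unfold thresholdDepth
        split_ifs <;> omega
    · subst hp0
      simp only [hwv, one_ne_zero, OfNat.one_ne_ofNat, OfNat.zero_ne_ofNat, zero_ne_one,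
        if_true, if_false] at hE0 hE1 hE2 hU0 hU1 hU2
      have hD := ih (c := c) hwE (p := 0) (q := q - 1) (z := z) (by omega) (by omega) (by omega)
        (by omega) (by omega)
      by_cases hc : w v ≤ c
      · have hL := ih (c := c - w v) hwU (p := 0) (q := q - 1) (z := z + 1) (by omega) (by omega)
          (by omega) (by omega) (by omega)
        have heq : z + 1 + thresholdDepth 0 (q - 1) (c - w v) = z + thresholdDepth 0 q c := by
          unfold thresholdDepth
          split_ifs <;> omega
        refine HasDepth.of_link_of_deletion (mem_threshold_link hv hc)
          (mem_threshold_erase) (heq ▸ hL) hD ?_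
        unfold thresholdDepth
        split_ifs <;> omega
      · rw [← threshold_erase_of_lt (not_le.1 hc)]
        convert hD using 1
        unfold thresholdDepth
        split_ifs <;> omega

end Threshold

section Power

variable {σ : Type} {w : σ → ℕ} (K : Type) [Field K]

lemma sqMon_eq_monomial (F : Finset σ) :
    sqMon K F = monomial (∑ i ∈ F, Finsupp.single i 1) 1 := by
  rw [monomial_sum_one]
  rfl

variable {K}

lemma sum_single_one_apply [DecidableEq σ] (F : Finset σ) (j : σ) :
    (∑ i ∈ F, Finsupp.single i 1) j = if j ∈ F then 1 else 0 := by
  simp [Finsupp.finsetSum_apply, Finsupp.single_apply]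

lemma support_sum_single_one (F : Finset σ) : (∑ i ∈ F, Finsupp.single i 1).support = F := by
  classical
  ext j
  simp [sum_single_one_apply]

lemma support_sqMon (F : Finset σ) : (sqMon K F).support = {∑ i ∈ F, Finsupp.single i 1} := by
  classical
  rw [sqMon_eq_monomial, support_monomial, if_neg one_ne_zero]

lemma sqMon_ne_zero (F : Finset σ) : sqMon K F ≠ 0 := by
  rw [← support_nonempty, support_sqMon]
  exact Finset.singleton_nonempty _

lemma sqMon_mem_supportIdeal {U : UpperSet (Finset σ)} {F : Finset σ} :
    sqMon K F ∈ supportIdeal K U ↔ F ∈ U := by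
  rw [mem_supportIdeal, support_sqMon]
  simp only [Finset.mem_singleton, forall_eq, support_sum_single_one]

variable (K) in
lemma supportIdeal_eq_span (U : UpperSet (Finset σ)) :
    supportIdeal K U = Ideal.span (sqMon K '' {F | F ∈ U}) := by
  classical
  refine le_antisymm (fun p hp ↦ ?_) ?_
  · have himage : sqMon K '' {F | F ∈ U} =
        (fun m ↦ monomial m (1 : K)) '' ((fun F ↦ ∑ i ∈ F, Finsupp.single i 1) '' {F | F ∈ U}) := by
      rw [Set.image_image]
      exact Set.image_congr fun F _ ↦ sqMon_eq_monomial K F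
    rw [himage, mem_ideal_span_monomial_image]
    refine fun m hm ↦ ⟨_, ⟨m.support, hp m hm, rfl⟩, fun j ↦ ?_⟩
    simp only [sum_single_one_apply]
    split_ifs with hj
    · exact Nat.one_le_iff_ne_zero.2 (Finsupp.mem_support_iff.1 hj)
    · exact Nat.zero_le _
  · rw [Ideal.span_le]
    rintro _ ⟨F, hF, rfl⟩
    exact sqMon_mem_supportIdeal.2 hF

variable (K) in
/-- The ideal of polynomials all of whose monomials have weight at least `d`. -/
noncomputable def weightIdeal (w : σ → ℕ) (d : ℕ) : Ideal (MvPolynomial σ K) where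
  carrier := {p | ∀ m ∈ p.support, d ≤ Finsupp.weight w m}
  zero_mem' := by simp
  add_mem' {p q} hp hq m hm := by
    classical
    exact (Finset.mem_union.1 (support_add hm)).elim (hp m) (hq m)
  smul_mem' q p hp m hm := by
    classical
    obtain ⟨a, -, b, hb, rfl⟩ := Finset.mem_add.1 (support_mul q p hm)
    rw [map_add]
    exact (hp b hb).trans (Nat.le_add_left _ _)

lemma weightIdeal_mul_le (d e : ℕ) :
    weightIdeal K w d * weightIdeal K w e ≤ weightIdeal K w (d + e) := by
  classical
  rw [Ideal.mul_le]
  intro p hp q hq m hm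
  obtain ⟨a, ha, b, hb, rfl⟩ := Finset.mem_add.1 (support_mul p q hm)
  rw [map_add]
  exact Nat.add_le_add (hp a ha) (hq b hb)

lemma pow_weightIdeal_le (d k : ℕ) : weightIdeal K w d ^ k ≤ weightIdeal K w (d * k) := by
  induction k with
  | zero => exact fun _ _ m _ ↦ Nat.zero_le _
  | succ k ih =>
    rw [pow_succ, Nat.mul_succ]
    exact (Ideal.mul_mono_left ih).trans (weightIdeal_mul_le _ _)

lemma sqMon_mem_weightIdeal {F : Finset σ} {d : ℕ} :
    sqMon K F ∈ weightIdeal K w d ↔ d ≤ ∑ i ∈ F, w i := by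
  have : sqMon K F ∈ weightIdeal K w d ↔ ∀ m ∈ (sqMon K F).support, d ≤ Finsupp.weight w m :=
    Iff.rfl
  rw [this, support_sqMon]
  simp [Finsupp.weight_single]

variable (K) in
/-- The ideal generated by the squarefree monomials of weight at least two. -/
noncomputable def weightTwoIdeal (w : σ → ℕ) : Ideal (MvPolynomial σ K) :=
  Ideal.span (sqMon K '' {F | 2 ≤ ∑ i ∈ F, w i})

lemma exists_subset_sum_eq_two (hw : ∀ i, w i ≤ 2) {F : Finset σ} (hF : 2 ≤ ∑ i ∈ F, w i) :
    ∃ G ⊆ F, ∑ i ∈ G, w i = 2 := by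
  by_cases h : ∃ i ∈ F, w i = 2
  · obtain ⟨i, hi, hwi⟩ := h
    exact ⟨{i}, Finset.singleton_subset_iff.2 hi, by rwa [Finset.sum_singleton]⟩
  · push Not at h
    have h₂ : F.filter (w · = 2) = ∅ := Finset.filter_eq_empty_iff.2 fun i hi ↦ h i hi
    rw [sum_eq_two_mul_add fun i _ ↦ hw i, h₂, Finset.card_empty, mul_zero, zero_add] at hF
    obtain ⟨G, hG, hcard⟩ := Finset.exists_subset_card_eq hF
    refine ⟨G, hG.trans (Finset.filter_subset _ _), ?_⟩
    rw [Finset.sum_congr rfl fun i hi ↦ (Finset.mem_filter.1 (hG hi)).2,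
      ← Finset.card_eq_sum_ones, hcard]

lemma sqMon_mem_pow_weightTwoIdeal (hw : ∀ i, w i ≤ 2) {F : Finset σ} {k : ℕ} :
    sqMon K F ∈ weightTwoIdeal K w ^ k ↔ 2 * k ≤ ∑ i ∈ F, w i := by
  classical
  constructor
  · intro h
    have hle : weightTwoIdeal K w ≤ weightIdeal K w 2 := by
      rw [weightTwoIdeal, Ideal.span_le]
      rintro _ ⟨G, hG, rfl⟩
      exact sqMon_mem_weightIdeal.2 hG
    exact sqMon_mem_weightIdeal.1 (pow_weightIdeal_le 2 k (Ideal.pow_right_mono hle k h))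
  · induction k generalizing F with
    | zero => simp
    | succ k ih =>
      intro hF
      obtain ⟨G, hGF, hG⟩ := exists_subset_sum_eq_two hw (F := F) (by omega)
      have hsum := Finset.sum_sdiff (f := w) hGF
      have hprod : sqMon K (F \ G) * sqMon K G = sqMon K F := Finset.prod_sdiff hGF
      rw [← hprod, pow_succ]
      exact Ideal.mul_mem_mul (ih (by omega)) (Ideal.subset_span ⟨G, hG.ge, rfl⟩)

lemma sqfreePower_ne_bot_iff {I : Ideal (MvPolynomial σ K)} {k : ℕ} :
    sqfreePower K I k ≠ ⊥ ↔ ∃ F : Finset σ, sqMon K F ∈ I ^ k := by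
  rw [sqfreePower, Ne, Ideal.span_eq_bot]
  constructor
  · intro h
    by_contra! h'
    refine h ?_
    rintro _ ⟨F, rfl, hF⟩
    exact absurd hF (h' F)
  · rintro ⟨F, hF⟩ h
    exact sqMon_ne_zero F (h _ ⟨F, rfl, hF⟩)

lemma sum_eq_card_add (hw : ∀ i, w i ≤ 2) (hw₀ : ∀ i, w i ≠ 0) (F : Finset σ) :
    ∑ i ∈ F, w i = F.card + (F.filter (w · = 2)).card := by
  have h₀ : (F.filter (w · = 0)).card = 0 :=
    Finset.card_eq_zero.2 (Finset.filter_eq_empty_iff.2 fun i _ ↦ hw₀ i)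
  have h₁ := sum_eq_two_mul_add (V := F) fun i _ ↦ hw i
  have h₂ := card_eq_add_add (V := F) fun i _ ↦ hw i
  omega

variable [Fintype σ]

lemma sqfreePower_weightTwoIdeal (hw : ∀ i, w i ≤ 2) {k : ℕ} (hk : 1 ≤ k) :
    sqfreePower K (weightTwoIdeal K w) k =
      supportIdeal K (threshold Finset.univ w (2 * k - 1)) := by
  rw [supportIdeal_eq_span, sqfreePower]
  congr 1
  ext p
  constructor
  · rintro ⟨F, rfl, hF⟩
    rw [sqMon_mem_pow_weightTwoIdeal hw] at hF
    exact ⟨F, fun _ ↦ by omega, rfl⟩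
  · rintro ⟨F, hF, rfl⟩
    have := hF (Finset.subset_univ F)
    exact ⟨F, rfl, (sqMon_mem_pow_weightTwoIdeal hw).2 (by omega)⟩

lemma monGrade_weightTwoIdeal (hw : ∀ i, w i ≤ 2) {m : ℕ} (hm : ∑ i, w i = 2 * m) :
    monGrade K (weightTwoIdeal K w) = m := by
  refine IsGreatest.csSup_eq ⟨?_, fun k hk ↦ ?_⟩
  · exact sqfreePower_ne_bot_iff.2
      ⟨Finset.univ, (sqMon_mem_pow_weightTwoIdeal hw).2 hm.ge⟩
  · obtain ⟨F, hF⟩ := sqfreePower_ne_bot_iff.1 hk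
    rw [sqMon_mem_pow_weightTwoIdeal hw] at hF
    have := Finset.sum_le_sum_of_subset (f := w) (Finset.subset_univ F)
    omega

lemma indeg_sqfreePower_weightTwoIdeal (hw : ∀ i, w i ≤ 2) {k d : ℕ} (hk : 1 ≤ k)
    (hd : ∃ F : Finset σ, F.card = d ∧ 2 * k ≤ ∑ i ∈ F, w i)
    (hle : ∀ F : Finset σ, 2 * k ≤ ∑ i ∈ F, w i → d ≤ F.card) :
    indeg K (sqfreePower K (weightTwoIdeal K w) k) = d := by
  have key (F : Finset σ) :
      sqMon K F ∈ sqfreePower K (weightTwoIdeal K w) k ↔ 2 * k ≤ ∑ i ∈ F, w i := by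
    rw [sqfreePower_weightTwoIdeal hw hk, sqMon_mem_supportIdeal, mem_threshold]
    simp only [Finset.subset_univ, true_imp_iff]
    omega
  unfold indeg
  simp only [key]
  refine IsLeast.csInf_eq ⟨hd, ?_⟩
  rintro _ ⟨F, rfl, hF⟩
  exact hle F hF

lemma polyDepth_sqfreePower_weightTwoIdeal (hw : ∀ i, w i ≤ 2) (hw₀ : ∀ i, w i ≠ 0)
    {k p q : ℕ} (hk : 1 ≤ k) (hp : (Finset.univ.filter (w · = 2)).card = p)
    (hq : (Finset.univ.filter (w · = 1)).card = q) (hq₁ : 1 ≤ q) :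
    polyDepth K (sqfreePower K (weightTwoIdeal K w) k) = thresholdDepth p q (2 * k - 1) := by
  classical
  rw [sqfreePower_weightTwoIdeal hw hk]
  have h := hasDepth_threshold K (c := 2 * k - 1) (fun i _ ↦ hw i) hp hq
    (Finset.card_eq_zero.2 (Finset.filter_eq_empty_iff.2 fun i _ ↦ hw₀ i)) (Or.inl hq₁)
  rw [h.polyDepth_eq, zero_add]
  intro h'
  simpa using h' (Finset.empty_subset _)

lemma nDepth_weightTwoIdeal_eq_one (hw : ∀ i, w i ≤ 2) (hw₀ : ∀ i, w i ≠ 0) {k : ℕ}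
    (hk : 1 ≤ k) (hks : k ≤ (Finset.univ.filter (w · = 2)).card)
    (hq : 1 ≤ (Finset.univ.filter (w · = 1)).card) : nDepth K (weightTwoIdeal K w) k = 1 := by
  have hindeg : indeg K (sqfreePower K (weightTwoIdeal K w) k) = k := by
    refine indeg_sqfreePower_weightTwoIdeal hw hk ?_ fun F hF ↦ ?_
    · obtain ⟨F, hF, hcard⟩ := Finset.exists_subset_card_eq hks
      refine ⟨F, hcard, ?_⟩
      rw [Finset.sum_congr rfl fun i hi ↦ (Finset.mem_filter.1 (hF hi)).2, Finset.sum_const,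
        hcard, smul_eq_mul, mul_comm]
    · rw [sum_eq_card_add hw hw₀] at hF
      have := Finset.card_filter_le F (w · = 2)
      omega
  rw [nDepth, hindeg, polyDepth_sqfreePower_weightTwoIdeal hw hw₀ hk rfl rfl hq, thresholdDepth]
  split_ifs <;> omega

lemma nDepth_weightTwoIdeal_eq_zero (hw : ∀ i, w i ≤ 2) (hw₀ : ∀ i, w i ≠ 0) {k : ℕ}
    (hks : (Finset.univ.filter (w · = 2)).card < k) (hk : 2 * k ≤ ∑ i, w i) :
    nDepth K (weightTwoIdeal K w) k = 0 := by
  have hsum := sum_eq_two_mul_add (V := Finset.univ) fun i _ ↦ hw i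
  have hcard := sum_eq_card_add hw hw₀ Finset.univ
  have hindeg : indeg K (sqfreePower K (weightTwoIdeal K w) k) =
      2 * k - (Finset.univ.filter (w · = 2)).card := by
    refine indeg_sqfreePower_weightTwoIdeal hw (by omega) ?_ fun F hF ↦ ?_
    · obtain ⟨F, hF, -, hFcard⟩ := Finset.exists_subsuperset_card_eq
        (Finset.subset_univ (Finset.univ.filter (w · = 2)))
        (n := 2 * k - (Finset.univ.filter (w · = 2)).card) (by omega) (by omega)
      refine ⟨F, hFcard, ?_⟩
      have : F.filter (w · = 2) = Finset.univ.filter (w · = 2) := by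
        refine (Finset.filter_subset_filter _ (Finset.subset_univ F)).antisymm fun i hi ↦ ?_
        exact Finset.mem_filter.2 ⟨hF hi, (Finset.mem_filter.1 hi).2⟩
      rw [sum_eq_card_add hw hw₀, this]
      omega
    · rw [sum_eq_card_add hw hw₀] at hF
      have := Finset.card_le_card
        (Finset.filter_subset_filter (w · = 2) (Finset.subset_univ F))
      omega
  rw [nDepth, hindeg, polyDepth_sqfreePower_weightTwoIdeal hw hw₀ (by omega) rfl rfl (by omega),
    thresholdDepth]
  split_ifs <;> omega

end Power

/-- **Lemma 4.2.** Given positive integers `s < m`, there exists a squarefree monomial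
ideal `I ⊆ K[x₁,…,xₙ]` such that `ν(I) = m`, `g_I(k) = 1` for `k = 1,…,s` and
`g_I(k) = 0` for `k = s+1,…,m`. -/
theorem exists_sqfree_ideal_step_normalized_depth (K : Type) [Field K]
    (s m : ℕ) (hs : 1 ≤ s) (hsm : s < m) :
    ∃ (n : ℕ) (I : Ideal (MvPolynomial (Fin n) K)),
      IsSqfreeMonomialIdeal K I ∧ monGrade K I = m ∧
      (∀ k : ℕ, 1 ≤ k → k ≤ s → nDepth K I k = 1) ∧
      (∀ k : ℕ, s + 1 ≤ k → k ≤ m → nDepth K I k = 0) := by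
  obtain ⟨w, hw⟩ : ∃ w : Fin (2 * m - s) → ℕ, w = fun i ↦ if i.val < s then 2 else 1 := ⟨_, rfl⟩
  have hw₂ : ∀ i, w i ≤ 2 := fun i ↦ by
    rw [hw]
    dsimp only
    split_ifs <;> omega
  have hw₀ : ∀ i, w i ≠ 0 := fun i ↦ by
    rw [hw]
    dsimp only
    split_ifs <;> omega
  have hp : (Finset.univ.filter (w · = 2)).card = s := by
    simp [hw, Fin.card_filter_val_lt]
    omega
  have hsum : ∑ i, w i = 2 * m := by
    rw [sum_eq_card_add hw₂ hw₀, hp, Finset.card_fin]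
    omega
  have hq := sum_eq_two_mul_add (V := Finset.univ) fun i _ ↦ hw₂ i
  exact ⟨2 * m - s, weightTwoIdeal K w, ⟨_, rfl⟩, monGrade_weightTwoIdeal hw₂ hsum,
    fun k hk hks ↦ nDepth_weightTwoIdeal_eq_one hw₂ hw₀ hk (by omega) (by omega),
    fun k hk hkm ↦ nDepth_weightTwoIdeal_eq_zero hw₂ hw₀ (by omega) (by omega)⟩
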